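/- Let p be an odd prime, n ≥ 2, q = p^n, and let K be a field of characteristic p. With A = K[M] the group algebra of M = ZMod q × ZMod q, let P_• be the explicit complex of free A-modules with P_k free on e_0^k, …, e_k^k and differential ∂ as specified, let σ be the K-algebra automorphism of A induced by a ↦ ab, b ↦ b, and let α be the σ-semilinear degree-0 map given by the explicit formulas. Then ∂ ∘ α = α ∘ ∂, i.e. α commutes with the differential of P_•. -/

import Mathlib

noncomputable section

open MonoidAlgebra Finset

/-- The group `M = ZMod q × ZMod q`, written multiplicatively. -/
abbrev Mgrp (q : ℕ) : Type := Multiplicative (ZMod q × ZMod q)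

/-- The group algebra `A = K[M]`. -/
abbrev GrpAlg (K : Type) [Field K] (q : ℕ) : Type := MonoidAlgebra K (Mgrp q)

variable (K : Type) [Field K] (q : ℕ)

/-- The generator `a = (1,0)` of `M`, as an element of `K[M]`. -/
def aEl : GrpAlg K q := MonoidAlgebra.of K (Mgrp q) (Multiplicative.ofAdd (1, 0))

/-- The generator `b = (0,1)` of `M`, as an element of `K[M]`. -/
def bEl : GrpAlg K q := MonoidAlgebra.of K (Mgrp q) (Multiplicative.ofAdd (0, 1))

/-- `N(x) = ∑_{i=0}^{q−1} x^i`. -/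
def Nel (x : GrpAlg K q) : GrpAlg K q := ∑ i ∈ range q, x ^ i

/-- `ρ = ∑_{0 ≤ j ≤ i ≤ q−1} a^i b^j`. -/
def ρEl : GrpAlg K q :=
  ∑ ij ∈ (range q ×ˢ range q).filter (fun ij => ij.2 ≤ ij.1), aEl K q ^ ij.1 * bEl K q ^ ij.2

/-- `κ = ∑_{i=0}^{q−1} (i+1)·a^i`, with coefficients `(i+1)` taken in `K`. -/
def κEl : GrpAlg K q := ∑ i ∈ range q, ((i : K) + 1) • aEl K q ^ i

/-- The group automorphism `(i,j) ↦ (i, i+j)` of `M` (i.e. `a ↦ ab`, `b ↦ b`). -/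
def sigmaGrp (q : ℕ) : Mgrp q ≃* Mgrp q :=
  AddEquiv.toMultiplicative
    { toFun := fun x => (x.1, x.1 + x.2)
      invFun := fun x => (x.1, x.2 - x.1)
      left_inv := fun x => by simp
      right_inv := fun x => by simp
      map_add' := fun x y => by simp [Prod.ext_iff]; ring }

/-- The `K`-algebra automorphism `σ` of `A = K[M]` induced by the group automorphism
`a ↦ ab`, `b ↦ b` of `M`. -/
def σAlg : GrpAlg K q ≃ₐ[K] GrpAlg K q := MonoidAlgebra.domCongr K K (sigmaGrp q)

/-- `P_k`: the free `A`-module with basis `e_0^k, …, e_k^k`. -/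
abbrev PmodV (k : ℕ) : Type := Fin (k + 1) → GrpAlg K q

/-- The basis element `e_j^k` of `P_k`, indexed by `j : ℤ`, with the convention that
`e_j^k = 0` when `j < 0` or `j > k`. -/
def eZ (k : ℕ) (j : ℤ) : PmodV K q k :=
  if h : 0 ≤ j ∧ j < (k : ℤ) + 1 then Pi.single (⟨j.toNat, by omega⟩ : Fin (k + 1)) 1 else 0

/-- The image under the differential `∂ : P_{k+1} → P_k` of the basis element
`e_idx^{k+1}`, following the parity of the degree `k+1` and of the index `idx`:
`∂(e_{2j}^{2i}) = N(a)·e_{2j}^{2i−1} + N(b)·e_{2j−1}^{2i−1}`,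
`∂(e_{2j+1}^{2i}) = (a−1)·e_{2j+1}^{2i−1} − (b−1)·e_{2j}^{2i−1}`,
`∂(e_{2j}^{2i+1}) = (a−1)·e_{2j}^{2i} − N(b)·e_{2j−1}^{2i}`,
`∂(e_{2j+1}^{2i+1}) = N(a)·e_{2j+1}^{2i} + (b−1)·e_{2j}^{2i}`. -/
def delB (k idx : ℕ) : PmodV K q k :=
  if (k + 1) % 2 = 0 then
    if idx % 2 = 0 then
      Nel K q (aEl K q) • eZ K q k (idx : ℤ) + Nel K q (bEl K q) • eZ K q k ((idx : ℤ) - 1)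
    else
      (aEl K q - 1) • eZ K q k (idx : ℤ) - (bEl K q - 1) • eZ K q k ((idx : ℤ) - 1)
  else
    if idx % 2 = 0 then
      (aEl K q - 1) • eZ K q k (idx : ℤ) - Nel K q (bEl K q) • eZ K q k ((idx : ℤ) - 1)
    else
      Nel K q (aEl K q) • eZ K q k (idx : ℤ) + (bEl K q - 1) • eZ K q k ((idx : ℤ) - 1)

/-- The `A`-linear differential `∂ : P_{k+1} → P_k`. -/
def delMap (k : ℕ) (x : PmodV K q (k + 1)) : PmodV K q k :=
  ∑ j : Fin (k + 2), x j • delB K q k j.val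

/-- The image under `α : P_d → P_d` of the basis element `e_idx^d`:
`α(e_{2j}^{2i}) = ∑_{j ≤ m ≤ i} C(m,j)·(e_{2m}^{2i} − ρ·e_{2m+1}^{2i})`,
`α(e_{2j+1}^{2i}) = ∑_{j ≤ m ≤ i} C(m,j)·b·e_{2m+1}^{2i}`,
`α(e_{2j}^{2i+1}) = ∑_{j ≤ m ≤ i} C(m,j)·(b·e_{2m}^{2i+1} + e_{2m+1}^{2i+1})`,
`α(e_{2j+1}^{2i+1}) = ∑_{j ≤ m ≤ i} C(m,j)·e_{2m+1}^{2i+1}`,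
with binomial coefficients taken in `K`. -/
def alphaB (d idx : ℕ) : PmodV K q d :=
  if d % 2 = 0 then
    if idx % 2 = 0 then
      ∑ m ∈ Finset.Icc (idx / 2) (d / 2), (m.choose (idx / 2) : K) •
        (eZ K q d (2 * m : ℕ) - ρEl K q • eZ K q d ((2 * m : ℕ) + 1))
    else
      ∑ m ∈ Finset.Icc (idx / 2) (d / 2), (m.choose (idx / 2) : K) •
        (bEl K q • eZ K q d ((2 * m : ℕ) + 1))
  else
    if idx % 2 = 0 then
      ∑ m ∈ Finset.Icc (idx / 2) (d / 2), (m.choose (idx / 2) : K) •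
        (bEl K q • eZ K q d (2 * m : ℕ) + eZ K q d ((2 * m : ℕ) + 1))
    else
      ∑ m ∈ Finset.Icc (idx / 2) (d / 2), (m.choose (idx / 2) : K) •
        eZ K q d ((2 * m : ℕ) + 1)

/-- The `σ`-semilinear map `α : P_d → P_d` (it satisfies `α(λ·x) = σ(λ)·α(x)`). -/
def alphaMap (d : ℕ) (x : PmodV K q d) : PmodV K q d :=
  ∑ j : Fin (d + 1), σAlg K q (x j) • alphaB K q d j.val

/-- The image under `τ : P_d → P_{d+1}` of the basis element `e_idx^d`:
`τ(e_{2j}^{2i}) = −(j+1)·κ·e_{2j+2}^{2i+1}`, `τ(e_{2j+1}^{2i}) = −(j+1)·e_{2j+3}^{2i+1}`,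
`τ(e_{2j}^{2i+1}) = −(j+1)·e_{2j+2}^{2i+2}`, `τ(e_{2j+1}^{2i+1}) = −(j+1)·κ·e_{2j+3}^{2i+2}`,
with the coefficients `j+1` taken in `K`. -/
def tauB (d idx : ℕ) : PmodV K q (d + 1) :=
  if d % 2 = 0 then
    if idx % 2 = 0 then
      -(((idx / 2 : ℕ) + 1 : K) • (κEl K q • eZ K q (d + 1) ((idx : ℤ) + 2)))
    else
      -(((idx / 2 : ℕ) + 1 : K) • eZ K q (d + 1) ((idx : ℤ) + 2))
  else
    if idx % 2 = 0 then
      -(((idx / 2 : ℕ) + 1 : K) • eZ K q (d + 1) ((idx : ℤ) + 2))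
    else
      -(((idx / 2 : ℕ) + 1 : K) • (κEl K q • eZ K q (d + 1) ((idx : ℤ) + 2)))

/-- The `A`-linear map `τ : P_d → P_{d+1}`. -/
def tauMap (d : ℕ) (x : PmodV K q d) : PmodV K q (d + 1) :=
  ∑ j : Fin (d + 1), x j • tauB K q d j.val

/-!
On basis elements `α` is a sum over `m`, weighted by `C(m,j)`, of vectors that do not depend on
`j`. The differential brings in the index `2j - 1`, and Pascal's rule, read as summation by parts,
puts this case in the same form: `α(e_{2j-1})` is the sum with weights `C(m,j)` of the differences
`e_{2m-1} - e_{2m+1}` (multiplied by `b` in even degree). Hence `∂α = α∂` can be checked for each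
`m` separately, where it amounts to the values of `ρ(a - 1)`, `ρ(b - 1)` and `ρ(ab - 1)`; these come
from summing geometric progressions, using `a ^ q = 1`.
-/

section Sums

/-- The sum of the monomials `x ^ i * y ^ j` over the triangle `0 ≤ j ≤ i < n`, in any commutative
ring; `ρ` is the case `x = a`, `y = b`, `n = q`. -/
def triangularGeomSum {R : Type*} [CommRing R] (x y : R) (n : ℕ) : R :=
  ∑ i ∈ range n, x ^ i * ∑ j ∈ range (i + 1), y ^ j

variable {R : Type*} [CommRing R] (x y : R) (n : ℕ)

lemma triangularGeomSum_mul_sub_one_right :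
    triangularGeomSum x y n * (y - 1) =
      y * ∑ i ∈ range n, (x * y) ^ i - ∑ i ∈ range n, x ^ i := by
  rw [triangularGeomSum, sum_mul, mul_sum, ← sum_sub_distrib]
  refine sum_congr rfl fun i _ => ?_
  rw [mul_assoc, geom_sum_mul]
  ring

lemma triangularGeomSum_mul_sub_one_left :
    triangularGeomSum x y n * (x - 1) =
      x ^ n * ∑ i ∈ range n, y ^ i - ∑ i ∈ range n, (x * y) ^ i := by
  induction n with
  | zero => simp [triangularGeomSum]
  | succ n ih =>
    simp only [triangularGeomSum, sum_range_succ] at ih ⊢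
    linear_combination ih

lemma triangularGeomSum_mul_mul_sub_one :
    triangularGeomSum x y n * (x * y - 1) =
      x ^ n * (y * ∑ i ∈ range n, y ^ i) - ∑ i ∈ range n, x ^ i := by
  linear_combination x * triangularGeomSum_mul_sub_one_right x y n +
    triangularGeomSum_mul_sub_one_left x y n + mul_geom_sum (x * y) n - mul_geom_sum x n -
    x ^ n * mul_geom_sum y n

/-- Summation by parts, with Pascal's rule as the difference equation for the coefficients. -/
lemma sum_range_choose_succ_smul_sub {M : Type*} [AddCommGroup M] (g : ℕ → M) (j n : ℕ) :
    ∑ m ∈ range n, m.choose (j + 1) • (g m - g (m + 1)) =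
      ∑ m ∈ range n, m.choose j • g (m + 1) - n.choose (j + 1) • g n := by
  induction n with
  | zero => simp
  | succ n ih =>
    rw [sum_range_succ, sum_range_succ, ih, Nat.choose_succ_succ]
    module

lemma sum_Icc_choose_smul_eq_sum_range {S M : Type*} [Semiring S] [AddCommMonoid M] [Module S M]
    {f : ℕ → M} {d n : ℕ} (j : ℕ) (hdn : d < n) (hf : ∀ m, d < m → f m = 0) :
    ∑ m ∈ Icc j d, (m.choose j : S) • f m = ∑ m ∈ range n, m.choose j • f m := by
  simp only [Nat.cast_smul_eq_nsmul]
  refine sum_subset (fun m hm => mem_range.2 ((mem_Icc.1 hm).2.trans_lt hdn)) fun m _ hm => ?_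
  rcases lt_or_ge m j with hmj | hjm
  · rw [Nat.choose_eq_zero_of_lt hmj, zero_smul]
  · rw [hf m (not_le.1 fun hmd => hm (mem_Icc.2 ⟨hjm, hmd⟩)), smul_zero]

end Sums

section GroupAlgebra

lemma aEl_pow_eq_one : aEl K q ^ q = 1 := by
  have q_nsmul : q • ((1, 0) : ZMod q × ZMod q) = 0 := by simp
  rw [aEl, ← map_pow, ← ofAdd_nsmul, q_nsmul, ofAdd_zero, map_one]

lemma σAlg_aEl : σAlg K q (aEl K q) = aEl K q * bEl K q := by
  simp [σAlg, aEl, bEl, sigmaGrp, MonoidAlgebra.single_mul_single, ← ofAdd_add]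

lemma σAlg_bEl : σAlg K q (bEl K q) = bEl K q := by
  simp [σAlg, bEl, sigmaGrp]

lemma σAlg_Nel (x : GrpAlg K q) : σAlg K q (Nel K q x) = Nel K q (σAlg K q x) := by
  simp only [Nel, map_sum, map_pow]

lemma ρEl_eq_triangularGeomSum : ρEl K q = triangularGeomSum (aEl K q) (bEl K q) q := by
  simp only [ρEl, triangularGeomSum, mul_sum, sum_filter, sum_product]
  refine sum_congr rfl fun i hi => ?_
  rw [← sum_filter]
  refine sum_congr ?_ fun _ _ => rfl
  ext j
  simp only [mem_filter, mem_range] at hi ⊢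
  omega

lemma ρEl_mul_bEl_sub_one :
    ρEl K q * (bEl K q - 1) = bEl K q * Nel K q (aEl K q * bEl K q) - Nel K q (aEl K q) := by
  rw [ρEl_eq_triangularGeomSum, triangularGeomSum_mul_sub_one_right, Nel, Nel]

lemma ρEl_mul_aEl_sub_one :
    ρEl K q * (aEl K q - 1) = Nel K q (bEl K q) - Nel K q (aEl K q * bEl K q) := by
  rw [ρEl_eq_triangularGeomSum, triangularGeomSum_mul_sub_one_left, aEl_pow_eq_one, one_mul,
    Nel, Nel]

lemma ρEl_mul_aEl_mul_bEl_sub_one :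
    ρEl K q * (aEl K q * bEl K q - 1) = bEl K q * Nel K q (bEl K q) - Nel K q (aEl K q) := by
  rw [ρEl_eq_triangularGeomSum, triangularGeomSum_mul_mul_sub_one, aEl_pow_eq_one, one_mul,
    Nel, Nel]

end GroupAlgebra

section BasisElements

variable {K q} {d : ℕ}

lemma eZ_of_neg {i : ℤ} (hi : i < 0) : eZ K q d i = 0 :=
  dif_neg fun h => hi.not_ge h.1

lemma eZ_of_lt {i : ℤ} (hi : d < i) : eZ K q d i = 0 :=
  dif_neg fun h => by omega

lemma eZ_coe_fin (i : Fin (d + 1)) : eZ K q d (i : ℕ) = Pi.single i 1 :=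
  dif_pos ⟨Int.natCast_nonneg _, by omega⟩

lemma sum_range_choose_zero_smul_eZ_sub {n : ℕ} (hn : d + 1 < 2 * n) :
    ∑ m ∈ range n, m.choose 0 • (eZ K q d (2 * m - 1) - eZ K q d (2 * m + 1)) = 0 := by
  have telescope := sum_range_sub' (fun m : ℕ => eZ K q d (2 * m - 1)) n
  rw [eZ_of_neg (by simp), eZ_of_lt (by omega), sub_zero] at telescope
  convert telescope using 3 with m
  rw [Nat.choose_zero_right, one_smul]
  congr 2
  push_cast
  ring

lemma sum_range_choose_succ_smul_eZ_sub {n : ℕ} (hn : d + 1 < 2 * n) (j : ℕ) :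
    ∑ m ∈ range n, m.choose (j + 1) • (eZ K q d (2 * m - 1) - eZ K q d (2 * m + 1)) =
      ∑ m ∈ range n, m.choose j • eZ K q d (2 * m + 1) := by
  have succ_index (m : ℕ) : (2 * m + 1 : ℤ) = 2 * (m + 1 : ℕ) - 1 := by push_cast; ring
  simp only [succ_index]
  rw [sum_range_choose_succ_smul_sub (fun m : ℕ => eZ K q d (2 * m - 1)),
    eZ_of_lt (i := 2 * n - 1) (by omega), smul_zero, sub_zero]

end BasisElements

section Differential

variable {K q}

/-- The differential `∂` bundled as an `A`-linear map. -/
def delHom (k : ℕ) : PmodV K q (k + 1) →ₗ[GrpAlg K q] PmodV K q k :=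
  Fintype.linearCombination (GrpAlg K q) fun i : Fin (k + 2) => delB K q k i

variable (K q) in
lemma delHom_eZ (k i : ℕ) : delHom k (eZ K q (k + 1) i) = delB K q k i := by
  rcases lt_or_ge i (k + 2) with hi | hi
  · rw [eZ_coe_fin ⟨i, hi⟩, delHom, Fintype.linearCombination_apply_single, one_smul]
  · rw [eZ_of_lt (by omega), map_zero, delB, eZ_of_lt (by omega), eZ_of_lt (by omega)]
    simp

variable {k : ℕ}

lemma delHom_eZ_two_mul_of_odd (hk : Odd k) (j : ℕ) :
    delHom k (eZ K q (k + 1) (2 * j)) =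
      Nel K q (aEl K q) • eZ K q k (2 * j) + Nel K q (bEl K q) • eZ K q k (2 * j - 1) := by
  have h := delHom_eZ K q k (2 * j)
  rw [delB, if_pos (Nat.even_iff.1 hk.add_one), if_pos (by omega)] at h
  exact_mod_cast h

lemma delHom_eZ_two_mul_add_one_of_odd (hk : Odd k) (j : ℕ) :
    delHom k (eZ K q (k + 1) (2 * j + 1)) =
      (aEl K q - 1) • eZ K q k (2 * j + 1) - (bEl K q - 1) • eZ K q k (2 * j) := by
  have h := delHom_eZ K q k (2 * j + 1)
  rw [delB, if_pos (Nat.even_iff.1 hk.add_one), if_neg (by omega)] at h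
  simpa using h

lemma delHom_eZ_two_mul_of_even (hk : Even k) (j : ℕ) :
    delHom k (eZ K q (k + 1) (2 * j)) =
      (aEl K q - 1) • eZ K q k (2 * j) - Nel K q (bEl K q) • eZ K q k (2 * j - 1) := by
  have h := delHom_eZ K q k (2 * j)
  rw [delB, if_neg (by grind), if_pos (by omega)] at h
  exact_mod_cast h

lemma delHom_eZ_two_mul_add_one_of_even (hk : Even k) (j : ℕ) :
    delHom k (eZ K q (k + 1) (2 * j + 1)) =
      Nel K q (aEl K q) • eZ K q k (2 * j + 1) + (bEl K q - 1) • eZ K q k (2 * j) := by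
  have h := delHom_eZ K q k (2 * j + 1)
  rw [delB, if_neg (by grind), if_neg (by omega)] at h
  simpa using h

end Differential

section Alpha

variable {K q}

/-- The map `α` bundled as a `σ`-semilinear map. -/
def alphaHom (d : ℕ) : PmodV K q d →ₛₗ[(σAlg K q : GrpAlg K q →+* GrpAlg K q)] PmodV K q d where
  toFun := alphaMap K q d
  map_add' x y := by simp [alphaMap, add_smul, sum_add_distrib]
  map_smul' c x := by simp [alphaMap, mul_smul, smul_sum]

lemma alphaHom_apply (d : ℕ) (x : PmodV K q d) : alphaHom d x = alphaMap K q d x :=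
  rfl

lemma alphaHom_smul {d : ℕ} (c : GrpAlg K q) (x : PmodV K q d) :
    alphaHom d (c • x) = σAlg K q c • alphaHom d x :=
  (alphaHom d).map_smulₛₗ c x

lemma alphaB_of_lt {d i : ℕ} (hi : d < i) : alphaB K q d i = 0 := by
  rw [alphaB]
  split_ifs
  · rw [Icc_eq_empty (by omega), sum_empty]
  · refine sum_eq_zero fun m hm => ?_
    rw [mem_Icc] at hm
    rw [eZ_of_lt (by omega), smul_zero, smul_zero]
  · rw [Icc_eq_empty (by omega), sum_empty]
  · rw [Icc_eq_empty (by omega), sum_empty]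

variable (K q) in
lemma alphaHom_eZ (d i : ℕ) : alphaHom d (eZ K q d i) = alphaB K q d i := by
  rcases lt_or_ge i (d + 1) with hi | hi
  · rw [eZ_coe_fin ⟨i, hi⟩, alphaHom_apply, alphaMap, sum_eq_single ⟨i, hi⟩]
    · simp
    · intro l _ hl
      rw [Pi.single_eq_of_ne hl, map_zero, zero_smul]
    · simp
  · rw [eZ_of_lt (by omega), map_zero, alphaB_of_lt (by omega)]

variable {d n : ℕ}

lemma alphaHom_eZ_two_mul_of_even (hd : Even d) (hn : d < 2 * n) (j : ℕ) :
    alphaHom d (eZ K q d (2 * j)) = ∑ m ∈ range n, m.choose j •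
      (eZ K q d (2 * m) - ρEl K q • eZ K q d (2 * m + 1)) := by
  have h := alphaHom_eZ K q d (2 * j)
  rw [alphaB, if_pos (Nat.even_iff.1 hd), if_pos (by omega), Nat.mul_div_cancel_left j two_pos,
    sum_Icc_choose_smul_eq_sum_range (n := n) j (by omega)] at h
  · exact_mod_cast h
  · intro m hm
    rw [eZ_of_lt (by omega), eZ_of_lt (by omega), smul_zero, sub_zero]

lemma alphaHom_eZ_two_mul_add_one_of_even (hd : Even d) (hn : d < 2 * n) (j : ℕ) :
    alphaHom d (eZ K q d (2 * j + 1)) = ∑ m ∈ range n, m.choose j •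
      (bEl K q • eZ K q d (2 * m + 1)) := by
  have h := alphaHom_eZ K q d (2 * j + 1)
  rw [alphaB, if_pos (Nat.even_iff.1 hd), if_neg (by omega), show (2 * j + 1) / 2 = j by omega,
    sum_Icc_choose_smul_eq_sum_range (n := n) j (by omega)] at h
  · exact_mod_cast h
  · intro m hm
    rw [eZ_of_lt (by omega), smul_zero]

lemma alphaHom_eZ_two_mul_of_odd (hd : Odd d) (hn : d < 2 * n) (j : ℕ) :
    alphaHom d (eZ K q d (2 * j)) = ∑ m ∈ range n, m.choose j •
      (bEl K q • eZ K q d (2 * m) + eZ K q d (2 * m + 1)) := by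
  have h := alphaHom_eZ K q d (2 * j)
  rw [alphaB, if_neg (by grind), if_pos (by omega), Nat.mul_div_cancel_left j two_pos,
    sum_Icc_choose_smul_eq_sum_range (n := n) j (by omega)] at h
  · exact_mod_cast h
  · intro m hm
    rw [eZ_of_lt (by omega), eZ_of_lt (by omega), smul_zero, add_zero]

lemma alphaHom_eZ_two_mul_add_one_of_odd (hd : Odd d) (hn : d < 2 * n) (j : ℕ) :
    alphaHom d (eZ K q d (2 * j + 1)) = ∑ m ∈ range n, m.choose j • eZ K q d (2 * m + 1) := by
  have h := alphaHom_eZ K q d (2 * j + 1)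
  rw [alphaB, if_neg (by grind), if_neg (by omega), show (2 * j + 1) / 2 = j by omega,
    sum_Icc_choose_smul_eq_sum_range (n := n) j (by omega)] at h
  · exact_mod_cast h
  · exact fun m hm => eZ_of_lt (by omega)

lemma alphaHom_eZ_two_mul_sub_one_of_even (hd : Even d) (hn : d + 1 < 2 * n) (j : ℕ) :
    alphaHom d (eZ K q d (2 * j - 1)) = ∑ m ∈ range n, m.choose j •
      (bEl K q • (eZ K q d (2 * m - 1) - eZ K q d (2 * m + 1))) := by
  simp only [smul_comm _ (bEl K q), ← smul_sum]
  cases j with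
  | zero => rw [sum_range_choose_zero_smul_eZ_sub hn, eZ_of_neg (by simp), map_zero, smul_zero]
  | succ j =>
    rw [sum_range_choose_succ_smul_eZ_sub hn, show (2 * (j + 1 : ℕ) - 1 : ℤ) = 2 * j + 1 by grind,
      alphaHom_eZ_two_mul_add_one_of_even (n := n) hd (by omega)]
    simp only [smul_comm _ (bEl K q), ← smul_sum]

lemma alphaHom_eZ_two_mul_sub_one_of_odd (hd : Odd d) (hn : d + 1 < 2 * n) (j : ℕ) :
    alphaHom d (eZ K q d (2 * j - 1)) = ∑ m ∈ range n, m.choose j •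
      (eZ K q d (2 * m - 1) - eZ K q d (2 * m + 1)) := by
  cases j with
  | zero => rw [sum_range_choose_zero_smul_eZ_sub hn, eZ_of_neg (by simp), map_zero]
  | succ j =>
    rw [sum_range_choose_succ_smul_eZ_sub hn, show (2 * (j + 1 : ℕ) - 1 : ℤ) = 2 * j + 1 by grind,
      alphaHom_eZ_two_mul_add_one_of_odd (n := n) hd (by omega)]

end Alpha

section Commutation

variable {K q} {k : ℕ}

lemma delHom_alphaHom_eZ_two_mul_of_odd (hk : Odd k) (j : ℕ) :
    delHom k (alphaHom (k + 1) (eZ K q (k + 1) (2 * j))) =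
      alphaHom k (delHom k (eZ K q (k + 1) (2 * j))) := by
  rw [alphaHom_eZ_two_mul_of_even (n := k + 2) hk.add_one (by omega),
    delHom_eZ_two_mul_of_odd hk, map_add, alphaHom_smul, alphaHom_smul,
    alphaHom_eZ_two_mul_of_odd (n := k + 2) hk (by omega),
    alphaHom_eZ_two_mul_sub_one_of_odd (n := k + 2) hk (by omega),
    σAlg_Nel, σAlg_Nel, σAlg_aEl, σAlg_bEl]
  simp only [map_sum, map_nsmul, map_sub, map_smul, delHom_eZ_two_mul_of_odd hk,
    delHom_eZ_two_mul_add_one_of_odd hk, smul_sum, ← sum_add_distrib]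
  refine sum_congr rfl fun m _ => ?_
  linear_combination (norm := module)
    (m.choose j • ρEl_mul_bEl_sub_one K q) • eZ K q k (2 * m) -
      (m.choose j • ρEl_mul_aEl_sub_one K q) • eZ K q k (2 * m + 1)

lemma delHom_alphaHom_eZ_two_mul_add_one_of_odd (hk : Odd k) (j : ℕ) :
    delHom k (alphaHom (k + 1) (eZ K q (k + 1) (2 * j + 1))) =
      alphaHom k (delHom k (eZ K q (k + 1) (2 * j + 1))) := by
  rw [alphaHom_eZ_two_mul_add_one_of_even (n := k + 2) hk.add_one (by omega),
    delHom_eZ_two_mul_add_one_of_odd hk, map_sub, alphaHom_smul, alphaHom_smul,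
    alphaHom_eZ_two_mul_of_odd (n := k + 2) hk (by omega),
    alphaHom_eZ_two_mul_add_one_of_odd (n := k + 2) hk (by omega),
    map_sub, map_sub, map_one, σAlg_aEl, σAlg_bEl]
  simp only [map_sum, map_nsmul, map_smul, delHom_eZ_two_mul_add_one_of_odd hk, smul_sum,
    ← sum_sub_distrib]
  exact sum_congr rfl fun m _ => by module

lemma delHom_alphaHom_eZ_two_mul_of_even (hk : Even k) (j : ℕ) :
    delHom k (alphaHom (k + 1) (eZ K q (k + 1) (2 * j))) =
      alphaHom k (delHom k (eZ K q (k + 1) (2 * j))) := by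
  rw [alphaHom_eZ_two_mul_of_odd (n := k + 2) hk.add_one (by omega),
    delHom_eZ_two_mul_of_even hk, map_sub, alphaHom_smul, alphaHom_smul,
    alphaHom_eZ_two_mul_of_even (n := k + 2) hk (by omega),
    alphaHom_eZ_two_mul_sub_one_of_even (n := k + 2) hk (by omega),
    σAlg_Nel, map_sub, map_one, σAlg_aEl, σAlg_bEl]
  simp only [map_sum, map_nsmul, map_add, map_smul, delHom_eZ_two_mul_of_even hk,
    delHom_eZ_two_mul_add_one_of_even hk, smul_sum, ← sum_sub_distrib]
  refine sum_congr rfl fun m _ => ?_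
  linear_combination (norm := module)
    (m.choose j • ρEl_mul_aEl_mul_bEl_sub_one K q) • eZ K q k (2 * m + 1)

lemma delHom_alphaHom_eZ_two_mul_add_one_of_even (hk : Even k) (j : ℕ) :
    delHom k (alphaHom (k + 1) (eZ K q (k + 1) (2 * j + 1))) =
      alphaHom k (delHom k (eZ K q (k + 1) (2 * j + 1))) := by
  rw [alphaHom_eZ_two_mul_add_one_of_odd (n := k + 2) hk.add_one (by omega),
    delHom_eZ_two_mul_add_one_of_even hk, map_add, alphaHom_smul, alphaHom_smul,
    alphaHom_eZ_two_mul_of_even (n := k + 2) hk (by omega),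
    alphaHom_eZ_two_mul_add_one_of_even (n := k + 2) hk (by omega),
    map_sub, map_one, σAlg_Nel, σAlg_aEl, σAlg_bEl]
  simp only [map_sum, map_nsmul, delHom_eZ_two_mul_add_one_of_even hk, smul_sum,
    ← sum_add_distrib]
  refine sum_congr rfl fun m _ => ?_
  linear_combination (norm := module)
    (m.choose j • ρEl_mul_bEl_sub_one K q) • eZ K q k (2 * m + 1)

lemma delHom_alphaHom_eZ (k i : ℕ) :
    delHom k (alphaHom (k + 1) (eZ K q (k + 1) i)) =
      alphaHom k (delHom k (eZ K q (k + 1) i)) := by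
  obtain ⟨j, rfl | rfl⟩ := i.even_or_odd' <;> push_cast <;>
    rcases k.even_or_odd with hk | hk
  · exact delHom_alphaHom_eZ_two_mul_of_even hk j
  · exact delHom_alphaHom_eZ_two_mul_of_odd hk j
  · exact delHom_alphaHom_eZ_two_mul_add_one_of_even hk j
  · exact delHom_alphaHom_eZ_two_mul_add_one_of_odd hk j

lemma delHom_comp_alphaHom (k : ℕ) :
    (delHom k).comp (alphaHom (K := K) (q := q) (k + 1)) = (alphaHom k).comp (delHom k) :=
  (Pi.basisFun (GrpAlg K q) (Fin (k + 2))).ext fun i => by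
    rw [Pi.basisFun_apply, ← eZ_coe_fin]
    exact delHom_alphaHom_eZ k i

end Commutation

theorem stmt14_general (k : ℕ) (x : PmodV K q (k + 1)) :
    delMap K q k (alphaMap K q (k + 1) x) = alphaMap K q k (delMap K q k x) :=
  LinearMap.congr_fun (delHom_comp_alphaHom k) x

/-- for an odd prime `p`, `n ≥ 2`, `q = p^n` and `K` of characteristic `p`,
the `σ`-semilinear map `α` commutes with the differential `∂` of the complex `P_•`:
`∂ ∘ α = α ∘ ∂`. -/
theorem stmt14 (p n : ℕ) (hp : p.Prime) (hodd : Odd p) (hn : 2 ≤ n)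
    (hchar : CharP K p) (hq : q = p ^ n) (k : ℕ) (x : PmodV K q (k + 1)) :
    delMap K q k (alphaMap K q (k + 1) x) = alphaMap K q k (delMap K q k x) :=
  stmt14_general K q k x
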